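/- arXiv:2405.03428 — 2 statements merged into one kernel-verified Lean document; each statement's English description precedes it below -/
import Mathlib

section
/- For every club D ⊆ ω₁ and every ordinal γ < ω₁, the set of conditions (c, E) of the fast club poset such that E ⊆ D and c contains an element greater than γ is dense: every condition of the fast club poset has an extension lying in this set. -/
/-- The first uncountable ordinal. -/
noncomputable def omega1 : Ordinal.{0} := (Cardinal.aleph 1).ord

/-- `S` is closed in `lam`: it contains all of its limit points below `lam`. -/
def IsClosedIn (S : Set Ordinal.{0}) (lam : Ordinal.{0}) : Prop :=
  ∀ α, α < lam → 0 < α → (∀ β < α, ∃ γ ∈ S, β < γ ∧ γ < α) → α ∈ S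

/-- `S` is a club in `lam`: a closed unbounded subset of `lam`. -/
def IsClubIn (S : Set Ordinal.{0}) (lam : Ordinal.{0}) : Prop :=
  S ⊆ Set.Iio lam ∧ IsClosedIn S lam ∧ ∀ β < lam, ∃ γ ∈ S, β < γ

/-- A condition of the fast club poset: a pair `(c, E)` where `c` is a countable
closed subset of `ω₁` and `E` is a club in `ω₁`. -/
structure FastClubCond : Type 1 where
  c : Set Ordinal.{0}
  E : Set Ordinal.{0}
  c_sub : c ⊆ Set.Iio omega1
  c_countable : c.Countable
  c_closed : IsClosedIn c omega1
  E_club : IsClubIn E omega1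

/-- `q` extends `p` in the fast club poset: `p.c` is an initial segment of `q.c`,
`q.E ⊆ p.E`, and every element of `q.c \ p.c` belongs to `p.E`. -/
def FCExtends (q p : FastClubCond) : Prop :=
  p.c ⊆ q.c ∧ (∀ x ∈ q.c, x ∉ p.c → ∀ y ∈ p.c, y < x) ∧
  q.E ⊆ p.E ∧ ∀ x ∈ q.c, x ∉ p.c → x ∈ p.E

/-!
Any `x ∈ p.E` above both `γ` and `p.c` gives the extension `(p.c ∪ {x}, D ∩ p.E)` of `p`. Such an
`x` exists, and `D ∩ p.E` is a club, because `ω₁` has uncountable cofinality.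
-/

universe u

open Cardinal Set
open scoped Set.Notation

theorem aleph0_lt_cof_omega1 : ℵ₀ < omega1.cof := by
  simp [omega1]

theorem exists_lt_forall_le_of_countable {s : Set Ordinal.{u}} {a : Ordinal.{u}}
    (ha : ℵ₀ < a.cof) (hs : s ⊆ Iio a) (hsc : s.Countable) : ∃ b < a, ∀ y ∈ s, y ≤ b := by
  have hcard : #s < (Ordinal.lift.{u + 1} a).cof := by
    rw [← Ordinal.lift_cof]
    exact hsc.le_aleph0.trans_lt (aleph0_lt_lift.2 ha)
  exact ⟨sSup s, Ordinal.sSup_lt_of_lt_cof hcard hs,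
    fun _ hy ↦ le_csSup ⟨a, fun _ hz ↦ (hs hz).le⟩ hy⟩

section Club

variable {S T : Set Ordinal.{0}} {lam : Ordinal.{0}}

theorem isClosedIn_iff_isClosed : IsClosedIn S lam ↔ IsClosed (Iio lam ↓∩ S) := by
  simp [IsClosedIn, isClosed_iff_accPt, ← Filter.comap_principal,
    isOpen_Iio.isOpenEmbedding_subtypeVal.accPt_comap_iff, SuccOrder.accPt_principal,
    Set.Nonempty, pos_iff_ne_zero]

theorem IsClosedIn.inter (hS : IsClosedIn S lam) (hT : IsClosedIn T lam) :
    IsClosedIn (S ∩ T) lam := by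
  rw [isClosedIn_iff_isClosed] at hS hT ⊢
  exact IsClosed.inter hS hT

theorem IsClosedIn.insert (hS : IsClosedIn S lam) (x : Ordinal.{0}) :
    IsClosedIn (insert x S) lam := by
  rw [isClosedIn_iff_isClosed] at hS ⊢
  exact (isClosed_singleton.preimage continuous_subtype_val).union hS

theorem IsClubIn.isClub (hS : IsClubIn S lam) : IsClub (Iio lam ↓∩ S) where
  dirSupClosed := fun _ hdS hd _ _ ha ↦
    (isClosedIn_iff_isClosed.1 hS.2.1).closure_subset_iff.2 hdS (ha.mem_closure hd)
  isCofinal β := by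
    obtain ⟨γ, hγS, hβγ⟩ := hS.2.2 β β.2
    exact ⟨⟨γ, hS.1 hγS⟩, hγS, hβγ.le⟩

theorem IsClubIn.inter (hlam : lam.cof ≠ ℵ₀) (hS : IsClubIn S lam) (hT : IsClubIn T lam) :
    IsClubIn (S ∩ T) lam := by
  refine ⟨inter_subset_left.trans hS.1, hS.2.1.inter hT.2.1, fun β hβ ↦ ?_⟩
  have hcof : Order.cof (Iio lam) ≠ ℵ₀ := by simpa [← Ordinal.lift_cof] using hlam
  obtain ⟨γ, hγS, hβγ⟩ := hS.2.2 β hβ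
  obtain ⟨δ, hδ, hγδ⟩ := (hS.isClub.inter hcof hT.isClub).isCofinal ⟨γ, hS.1 hγS⟩
  exact ⟨δ, hδ, hβγ.trans_le hγδ⟩

end Club

namespace FastClubCond

variable {D : Set Ordinal.{0}} {p : FastClubCond} {x : Ordinal.{0}}

/-- The condition `(p.c ∪ {x}, D ∩ p.E)`, which witnesses density when `x` lies above `p.c` and
`γ`. -/
def insertInter (p : FastClubCond) (hx : x ∈ p.E) (hD : IsClubIn D omega1) : FastClubCond where
  c := insert x p.c
  E := D ∩ p.E
  c_sub := insert_subset (p.E_club.1 hx) p.c_sub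
  c_countable := p.c_countable.insert x
  c_closed := p.c_closed.insert x
  E_club := hD.inter aleph0_lt_cof_omega1.ne' p.E_club

theorem insertInter_extends (hx : x ∈ p.E) (hD : IsClubIn D omega1) (hlt : ∀ y ∈ p.c, y < x) :
    FCExtends (p.insertInter hx hD) p := by
  refine ⟨subset_insert x p.c, fun z hz hzc ↦ ?_, inter_subset_right, fun z hz hzc ↦ ?_⟩
  · exact eq_of_mem_insert_of_notMem hz hzc ▸ hlt
  · exact eq_of_mem_insert_of_notMem hz hzc ▸ hx

end FastClubCond

/-- For every club `D ⊆ ω₁` and every `γ < ω₁`, the set of conditions `(c, E)`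
with `E ⊆ D` and `c` containing an element greater than `γ` is dense in the
fast club poset. -/
theorem fastClub_dense (D : Set Ordinal.{0}) (hD : IsClubIn D omega1)
    (γ : Ordinal.{0}) (hγ : γ < omega1) (p : FastClubCond) :
    ∃ q : FastClubCond, FCExtends q p ∧ q.E ⊆ D ∧ ∃ α ∈ q.c, γ < α := by
  obtain ⟨β, hβ, hle⟩ := exists_lt_forall_le_of_countable aleph0_lt_cof_omega1
    (insert_subset hγ p.c_sub) (p.c_countable.insert γ)
  obtain ⟨x, hxE, hβx⟩ := p.E_club.2.2 β hβ
  have hγx : γ < x := (hle γ (mem_insert γ p.c)).trans_lt hβx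
  have hcx : ∀ y ∈ p.c, y < x := fun y hy ↦ (hle y (mem_insert_of_mem γ hy)).trans_lt hβx
  exact ⟨p.insertInter hxE hD, FastClubCond.insertInter_extends hxE hD hcx, inter_subset_left,
    x, mem_insert x p.c, hγx⟩
end

section
/- Let κ be a singular strong limit cardinal whose cofinality λ is uncountable, let ⟨κ_ξ : ξ < λ⟩ be a strictly increasing sequence of ordinals cofinal in κ, and for each ξ < λ let ≺_ξ be a well-order of the power set 𝒫(κ_ξ). Define a relation R on 𝒫(κ) by: X R Y iff there exists β < λ such that X ∩ κ_ξ ≺_ξ Y ∩ κ_ξ for every ξ with β ≤ ξ < λ. Then for every nonempty family ℱ ⊆ 𝒫(κ), the set 𝒲 of R-minimal elements of ℱ (those X ∈ ℱ such that no Y ∈ ℱ satisfies Y R X) is nonempty and has cardinality at most 2^λ; in particular, |𝒲| < κ. -/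
/-!
`R` is well founded: a descending `ω`-chain would, since `λ` has uncountable cofinality, descend
in a single `≺_ξ`. Two distinct subsets of `κ` have distinct traces on all large `κ_ξ`, so two
distinct minimal sets `X`, `Y` satisfy `X ∩ κ_ξ ≺_ξ Y ∩ κ_ξ` for some `ξ`, in either order.

The bound is then a statement about `I`-many well-founded relations `r i` on `W` such that any two
distinct points `x`, `y` satisfy `r i x y` for some `i`. Let `V ⊆ W` have size at most `2 ^ #I` and
contain, for every partial family `a : I ⇀ V`, a simultaneous `r i`-lower bound of the `a i`
whenever one exists in `W`. Given `w : W`, choose `a i` to be `r i`-minimal among the points of `V`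
that are `r i`-above `w`, for those `i` where there is one. The bound `v ∈ V` of this family
satisfies `r i w v` for no `i`, so `w = v` and `V = W`.
-/

open Cardinal Filter Set

universe u v w

theorem exists_closed_set_mk_le_wType {A : Type u} {β : A → Type v} {W : Type w}
    (op : ∀ a, (β a → W) → W) :
    ∃ V : Set W, lift.{max u v} #V ≤ lift.{w} #(WType β) ∧
      ∀ a (x : β a → W), (∀ b, x b ∈ V) → op a x ∈ V := by
  refine ⟨range (WType.elim W fun p ↦ op p.1 p.2), mk_range_le_lift, fun a x hx ↦ ?_⟩
  choose t ht using hx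
  exact ⟨WType.mk a t, congrArg (op a) (funext ht)⟩

theorem mk_wType_set_le_two_power (I : Type u) [Infinite I] :
    #(WType fun s : Set I ↦ s) ≤ 2 ^ #I := by
  have hI : ℵ₀ ≤ #I := aleph0_le_mk I
  have power_le (s : Set I) : ((2 : Cardinal.{u}) ^ #I) ^ #s ≤ 2 ^ #I := by
    rw [← power_mul]
    exact power_le_power_left two_ne_zero
      ((mul_le_mul' le_rfl (mk_set_le s)).trans_eq (mul_eq_self hI))
  refine WType.cardinalMk_le_of_le ?_
  calc (sum fun s : Set I ↦ ((2 : Cardinal.{u}) ^ #I) ^ #s)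
      ≤ sum fun _ : Set I ↦ (2 : Cardinal.{u}) ^ #I := sum_le_sum _ _ power_le
    _ = 2 ^ #I * 2 ^ #I := by rw [sum_const', mk_set]
    _ = 2 ^ #I := mul_eq_self (hI.trans (cantor _).le)

section WellFoundedCover

variable {I : Type u} {W : Type v}

theorem exists_mk_le_two_power_forall_lower_bound [Infinite I] (r : I → W → W → Prop) :
    ∃ V : Set W, lift.{u} #V ≤ lift.{v} (2 ^ #I) ∧
      ∀ (s : Set I) (a : s → W), (∀ i, a i ∈ V) → (∃ w, ∀ i : s, r i w (a i)) →
        ∃ v ∈ V, ∀ i : s, r i v (a i) := by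
  cases isEmpty_or_nonempty W with
  | inl _ => exact ⟨∅, by simp, fun _ _ _ ⟨w, _⟩ ↦ isEmptyElim w⟩
  | inr _ =>
    obtain ⟨V, hVcard, hV⟩ := exists_closed_set_mk_le_wType
      fun (s : Set I) (a : s → W) ↦ Classical.epsilon fun w ↦ ∀ i : s, r i w (a i)
    exact ⟨V, hVcard.trans (lift_le.2 (mk_wType_set_le_two_power I)),
      fun s a ha hw ↦ ⟨_, hV s a ha, Classical.epsilon_spec hw⟩⟩

theorem mk_le_two_power_of_pairwise_exists [Infinite I] {r : I → W → W → Prop}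
    (hr : ∀ i, WellFounded (r i)) (h : Pairwise fun x y ↦ ∃ i, r i x y) :
    lift.{u} #W ≤ lift.{v} (2 ^ #I) := by
  obtain ⟨V, hVcard, hV⟩ := exists_mk_le_two_power_forall_lower_bound r
  suffices hVuniv : V = Set.univ by rwa [hVuniv, mk_univ] at hVcard
  refine eq_univ_of_forall fun w ↦ ?_
  let s : Set I := {i | ∃ v ∈ V, r i w v}
  have exists_minimal (i : s) :
      ∃ a ∈ V, r i w a ∧ ∀ v ∈ V, r i w v → ¬ r i v a := by
    obtain ⟨a, ⟨haV, hwa⟩, hmin⟩ := (hr i).has_min {v | v ∈ V ∧ r i w v} i.2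
    exact ⟨a, haV, hwa, fun v hv hwv ↦ hmin v ⟨hv, hwv⟩⟩
  choose a haV hwa hmin using exists_minimal
  obtain ⟨v, hvV, hva⟩ := hV s a haV ⟨w, hwa⟩
  have not_rel (i : I) : ¬ r i w v := fun hwv ↦
    let j : s := ⟨i, v, hvV, hwv⟩
    hmin j v hvV hwv (hva j)
  have hwv : w = v := by_contra fun hne ↦ (h hne).elim not_rel
  exact hwv ▸ hvV

end WellFoundedCover

section Eventually

variable {ι : Type u} {W : Type v} {l : Filter ι} {r : ι → W → W → Prop}

theorem wellFounded_eventually [CountableInterFilter l] (hr : ∃ᶠ i in l, WellFounded (r i)) :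
    WellFounded fun x y ↦ ∀ᶠ i in l, r i x y := by
  refine wellFounded_iff_isEmpty_descending_chain.2 ⟨fun ⟨x, hx⟩ ↦ ?_⟩
  obtain ⟨i, hwf, hi⟩ := (hr.and_eventually (eventually_countable_forall.2 hx)).exists
  exact (wellFounded_iff_isEmpty_descending_chain.1 hwf).elim ⟨x, hi⟩

theorem mk_le_two_power_of_isAntichain_eventually [Infinite ι] (hr : ∀ i, WellFounded (r i))
    {M : Set W} (htri : M.Pairwise fun x y ↦ ∀ᶠ i in l, r i x y ∨ r i y x)
    (hM : IsAntichain (fun x y ↦ ∀ᶠ i in l, r i x y) M) :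
    lift.{u} #M ≤ lift.{v} (2 ^ #ι) := by
  refine mk_le_two_power_of_pairwise_exists (r := fun i (x y : M) ↦ r i x y)
    (fun i ↦ InvImage.wf _ (hr i)) fun x y hxy ↦ ?_
  have hne : (x : W) ≠ y := Subtype.coe_injective.ne hxy
  have not_ge : ∃ᶠ i in l, ¬ r i y x := not_eventually.1 (hM y.2 x.2 hne.symm)
  obtain ⟨i, hyx, hor⟩ := (not_ge.and_eventually (htri x.2 y.2 hne)).exists
  exact ⟨i, hor.resolve_right hyx⟩

theorem eventually_preimage_ne {α : Type v} {B : ι → Type w} (j : ∀ i, B i → α)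
    (hj : ∀ a, ∀ᶠ i in l, a ∈ range (j i)) {X Y : Set α} (hXY : X ≠ Y) :
    ∀ᶠ i in l, j i ⁻¹' X ≠ j i ⁻¹' Y := by
  obtain ⟨a, ha⟩ : ∃ a, ¬ (a ∈ X ↔ a ∈ Y) := by simpa [Set.ext_iff] using hXY
  filter_upwards [hj a]
  rintro i ⟨b, rfl⟩ heq
  exact ha (Set.ext_iff.1 heq b)

theorem mk_minimal_eventually_preimage_le [Infinite ι] {α : Type v} {B : ι → Type w}
    {j : ∀ i, B i → α} (hj : ∀ a, ∀ᶠ i in l, a ∈ range (j i))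
    {prec : ∀ i, Set (B i) → Set (B i) → Prop} (hwo : ∀ i, IsWellOrder (Set (B i)) (prec i))
    (F : Set (Set α)) :
    lift.{u} #↥{X ∈ F | ¬ ∃ Y ∈ F, ∀ᶠ i in l, prec i (j i ⁻¹' Y) (j i ⁻¹' X)} ≤
      lift.{v} (2 ^ #ι) := by
  refine mk_le_two_power_of_isAntichain_eventually
    (r := fun i X Y ↦ prec i (j i ⁻¹' X) (j i ⁻¹' Y)) (fun i ↦ InvImage.wf _ (hwo i).wf) ?_
    fun X hX Y hY _ hXY ↦ hY.2 ⟨X, hX.1, hXY⟩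
  intro X _ Y _ hXY
  filter_upwards [eventually_preimage_ne j hj hXY] with i hne
  exact (trichotomous_of (prec i) _ _).imp_right (Or.resolve_left · hne)

theorem cardinalInterFilter_atTop_cof (ι : Type u) [LinearOrder ι] :
    CardinalInterFilter (atTop : Filter ι) (Order.cof ι) where
  cardinal_sInter_mem S hScard hS := by
    cases isEmpty_or_nonempty ι with
    | inl _ => simp [filter_eq_bot_of_isEmpty]
    | inr _ =>
      choose! b hb using fun s hs ↦ mem_atTop_sets.1 (hS s hs)
      have not_cofinal : ¬ IsCofinal (b '' S) := fun h ↦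
        ((Order.cof_le h).trans mk_image_le).not_gt hScard
      obtain ⟨c, hc⟩ : ∃ c, ∀ s ∈ S, b s < c := by simpa [IsCofinal] using not_cofinal
      exact mem_of_superset (Ici_mem_atTop c) fun i hi s hs ↦ hb s hs i ((hc s hs).le.trans hi)

theorem aleph0_lt_cof_subtype_lt {γ : Ordinal.{u}} (hγ : ℵ₀ < γ.cof) :
    ℵ₀ < Order.cof {ξ : Ordinal.{u} // ξ < γ} := by
  change ℵ₀ < Order.cof (Iio γ)
  rw [Ordinal.cof_Iio, ← Ordinal.lift_cof]
  exact aleph0_lt_lift.2 hγ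

end Eventually

theorem minimal_sets_bound_general (δ γ : Ordinal.{u}) (hγ : ℵ₀ < γ.cof)
    (k : {ξ : Ordinal.{u} // ξ < γ} → Ordinal.{u}) (hmono : Monotone k) (hle : ∀ ξ, k ξ ≤ δ)
    (hcofk : ∀ α < δ, ∃ ξ, α < k ξ)
    (prec : ∀ ξ, Set {β : Ordinal.{u} // β < k ξ} → Set {β : Ordinal.{u} // β < k ξ} → Prop)
    (hwo : ∀ ξ, IsWellOrder (Set {β : Ordinal.{u} // β < k ξ}) (prec ξ))
    (R : Set {β : Ordinal.{u} // β < δ} → Set {β : Ordinal.{u} // β < δ} → Prop)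
    (hR : ∀ X Y, R X Y ↔ ∃ β < γ, ∀ ξ : {ξ : Ordinal.{u} // ξ < γ}, β ≤ ξ.1 →
      prec ξ {y | (⟨y.1, y.2.trans_le (hle ξ)⟩ : {β : Ordinal.{u} // β < δ}) ∈ X}
             {y | (⟨y.1, y.2.trans_le (hle ξ)⟩ : {β : Ordinal.{u} // β < δ}) ∈ Y})
    (F : Set (Set {β : Ordinal.{u} // β < δ})) (hF : F.Nonempty) :
    {X ∈ F | ¬ ∃ Y ∈ F, R Y X}.Nonempty ∧
    #↥{X ∈ F | ¬ ∃ Y ∈ F, R Y X} ≤ lift.{u + 1} (2 ^ γ.card) := by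
  have hcof := aleph0_lt_cof_subtype_lt hγ
  have : Infinite {ξ // ξ < γ} := infinite_iff.2 (hcof.le.trans (Order.cof_le_cardinalMk _))
  have := cardinalInterFilter_atTop_cof {ξ // ξ < γ}
  have := CardinalInterFilter.toCountableInterFilter (atTop : Filter {ξ // ξ < γ}) hcof
  let j (ξ : {ξ // ξ < γ}) (y : {β // β < k ξ}) : {β // β < δ} := ⟨y.1, y.2.trans_le (hle ξ)⟩
  have hj (a : {β // β < δ}) : ∀ᶠ ξ in atTop, a ∈ range (j ξ) := by
    obtain ⟨ξ₀, hξ₀⟩ := hcofk a a.2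
    filter_upwards [eventually_ge_atTop ξ₀] with ξ hξ
    exact ⟨⟨a, hξ₀.trans_le (hmono hξ)⟩, rfl⟩
  obtain rfl : R = fun X Y ↦ ∀ᶠ ξ in atTop, prec ξ (j ξ ⁻¹' X) (j ξ ⁻¹' Y) := by
    ext X Y
    rw [hR, eventually_atTop, Subtype.exists]
    exact exists_congr fun β ↦ exists_prop.symm
  constructor
  · have hwf := wellFounded_eventually (l := atTop)
      (.of_forall fun ξ ↦ InvImage.wf (j ξ ⁻¹' ·) (hwo ξ).wf)
    obtain ⟨X, hX, hmin⟩ := hwf.has_min F hF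
    exact ⟨X, hX, fun ⟨Y, hY, hYX⟩ ↦ hmin Y hY hYX⟩
  · have hcard : #{ξ // ξ < γ} = lift.{u + 1} γ.card := mk_Iio_ordinal γ
    simpa [hcard] using mk_minimal_eventually_preimage_le hj hwo F

/-- Let `κ` be a singular strong limit cardinal whose cofinality `lam` is
uncountable, let `⟨k ξ : ξ < lam.ord⟩` be a strictly increasing sequence of
ordinals cofinal in `κ.ord`, and for each `ξ` let `prec ξ` be a well-order of
the power set of `k ξ`.  Define `R X Y` iff `X ∩ k ξ ≺_ξ Y ∩ k ξ` for all
sufficiently large `ξ`.  Then for every nonempty family `F` of subsets of `κ`,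
the set of `R`-minimal elements of `F` is nonempty and of cardinality at most
`2 ^ lam`; in particular it has cardinality less than `κ`. -/
theorem minimal_sets_bound (κ : Cardinal.{0})
    (hsl : ∀ μ < κ, (2 : Cardinal.{0}) ^ μ < κ)
    (lam : Cardinal.{0}) (hlam : lam = κ.ord.cof)
    (hsing : lam < κ) (hunc : Cardinal.aleph0 < lam)
    (k : {ξ : Ordinal.{0} // ξ < lam.ord} → Ordinal.{0})
    (hmono : ∀ ξ ζ, ξ < ζ → k ξ < k ζ)
    (hlt : ∀ ξ, k ξ < κ.ord)
    (hcofk : ∀ α < κ.ord, ∃ ξ, α < k ξ)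
    (prec : ∀ ξ, Set {β : Ordinal.{0} // β < k ξ} → Set {β : Ordinal.{0} // β < k ξ} → Prop)
    (hwo : ∀ ξ, IsWellOrder (Set {β : Ordinal.{0} // β < k ξ}) (prec ξ))
    (R : Set {β : Ordinal.{0} // β < κ.ord} → Set {β : Ordinal.{0} // β < κ.ord} → Prop)
    (hR : ∀ X Y, R X Y ↔ ∃ β < lam.ord, ∀ ξ : {ξ : Ordinal.{0} // ξ < lam.ord}, β ≤ ξ.1 →
      prec ξ {y | (⟨y.1, y.2.trans (hlt ξ)⟩ : {β : Ordinal.{0} // β < κ.ord}) ∈ X}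
             {y | (⟨y.1, y.2.trans (hlt ξ)⟩ : {β : Ordinal.{0} // β < κ.ord}) ∈ Y})
    (F : Set (Set {β : Ordinal.{0} // β < κ.ord})) (hF : F.Nonempty) :
    {X ∈ F | ¬ ∃ Y ∈ F, R Y X}.Nonempty ∧
    Cardinal.mk ↥{X ∈ F | ¬ ∃ Y ∈ F, R Y X} ≤ Cardinal.lift.{1} (2 ^ lam) ∧
    Cardinal.mk ↥{X ∈ F | ¬ ∃ Y ∈ F, R Y X} < Cardinal.lift.{1} κ := by
  obtain ⟨hne, hle⟩ := minimal_sets_bound_general κ.ord lam.ord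
    (by rwa [hlam, Ordinal.cof_ord_cof, ← hlam]) k (StrictMono.monotone hmono)
    (fun ξ ↦ (hlt ξ).le) hcofk prec hwo R hR F hF
  rw [card_ord] at hle
  exact ⟨hne, hle, hle.trans_lt (lift_lt.2 (hsl lam hsing))⟩
end
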